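/- arXiv:2004.03524 — 2 statements merged into one kernel-verified Lean document; each statement's English description precedes it below -/
import Mathlib

section
/- Let (f, f♭) : (R, P) → (A, M) be a map of pre-log rings. Let M ⊕_P M denote the pushout in commutative monoids of the diagram M ← P → M (both legs f♭), let μ : M ⊕_P M → M be the codiagonal induced by the identity on both copies of M, and let (M ⊕_P M)^rep be the repletion of μ, namely the pullback of η : M → M^gp and μ^gp : (M ⊕_P M)^gp → M^gp. Let C be the commutative ring (A ⊗_R A) ⊗_{ℤ[M ⊕_P M]} ℤ[(M ⊕_P M)^rep], where ℤ[M ⊕_P M] → A ⊗_R A is the ring map induced by the monoid map M ⊕_P M → (A ⊗_R A, ·) with components m ↦ α(m) ⊗ 1 and m ↦ 1 ⊗ α(m), and ℤ[M ⊕_P M] → ℤ[(M ⊕_P M)^rep] is induced by the canonical map M ⊕_P M → (M ⊕_P M)^rep. Let ε : C → A be the augmentation induced by the multiplication A ⊗_R A → A and by α composed with the pullback projection (M ⊕_P M)^rep → M, and let I = ker(ε). Then there is an isomorphism of A-modules Ω¹_{(A,M)|(R,P)} ≅ I/I². -/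
open scoped TensorProduct

universe u

/-- `η : M →* G` exhibits the abelian group `G` as the group completion
(Grothendieck group) of the commutative monoid `M`. -/
def IsGroupCompletion {M G : Type u} [CommMonoid M] [CommGroup G]
    (η : M →* G) : Prop :=
  ∀ (H : Type u) [CommGroup H] (f : M →* H), ∃! g : G →* H, g.comp η = f

/-- `iM, iN` exhibit `Q` as the pushout in commutative monoids of the diagram
`M ← P → N` given by `f : P →* M` and `g : P →* N`. -/
def IsCommMonoidPushout {P M N Q : Type u} [CommMonoid P] [CommMonoid M]
    [CommMonoid N] [CommMonoid Q] (f : P →* M) (g : P →* N)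
    (iM : M →* Q) (iN : N →* Q) : Prop :=
  iM.comp f = iN.comp g ∧
    ∀ (H : Type u) [CommMonoid H] (jM : M →* H) (jN : N →* H),
      jM.comp f = jN.comp g → ∃! h : Q →* H, h.comp iM = jM ∧ h.comp iN = jN

/-- The pullback of two monoid homomorphisms `f : X →* Z` and `g : Y →* Z`:
the submonoid `{(x, y) : f x = g y}` of `X × Y`. -/
def pullbackSubmonoid {X Y Z : Type u} [CommMonoid X] [CommMonoid Y]
    [CommMonoid Z] (f : X →* Z) (g : Y →* Z) : Submonoid (X × Y) where
  carrier := {x | f x.1 = g x.2}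
  one_mem' := by simp
  mul_mem' := by
    intro a b ha hb
    simp only [Set.mem_setOf_eq, Prod.fst_mul, Prod.snd_mul, map_mul] at *
    rw [ha, hb]

/-- The module of log Kähler differentials `Ω¹_{(A,M)|(R,P)}` of a map
`(f, f♭) : (R, P) → (A, M)` of pre-log rings: the quotient of
`Ω¹_{A|R} × (A ⊗_ℤ M^gp)` by the `A`-submodule generated by the elements
`(d(α m), −α(m) ⊗ η(m))` for `m ∈ M` and `(0, 1 ⊗ η(f♭ p))` for `p ∈ P`. -/
def LogKaehler (R A P M Mgp : Type u) [CommRing R] [CommRing A] [Algebra R A]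
    [CommMonoid P] [CommMonoid M] [CommGroup Mgp]
    (α : M →* A) (fb : P →* M) (η : M →* Mgp) : Type u :=
  (Ω[A⁄R] × (A ⊗[ℤ] Additive Mgp)) ⧸
    (Submodule.span A
      (Set.range (fun m : M =>
          ((KaehlerDifferential.D R A (α m),
            -(α m ⊗ₜ[ℤ] Additive.ofMul (η m))) : Ω[A⁄R] × (A ⊗[ℤ] Additive Mgp))) ∪
        Set.range (fun p : P =>
          ((0, (1 : A) ⊗ₜ[ℤ] Additive.ofMul (η (fb p))) :
            Ω[A⁄R] × (A ⊗[ℤ] Additive Mgp)))))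

noncomputable instance (R A P M Mgp : Type u) [CommRing R] [CommRing A]
    [Algebra R A] [CommMonoid P] [CommMonoid M] [CommGroup Mgp]
    (α : M →* A) (fb : P →* M) (η : M →* Mgp) :
    AddCommGroup (LogKaehler R A P M Mgp α fb η) := by
  delta LogKaehler; infer_instance

noncomputable instance (R A P M Mgp : Type u) [CommRing R] [CommRing A]
    [Algebra R A] [CommMonoid P] [CommMonoid M] [CommGroup Mgp]
    (α : M →* A) (fb : P →* M) (η : M →* Mgp) :
    Module A (LogKaehler R A P M Mgp α fb η) := by
  delta LogKaehler; infer_instance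


section Helpers

variable (R A P M Mgp : Type u) [CommRing R] [CommRing A]
    [Algebra R A] [CommMonoid P] [CommMonoid M] [CommGroup Mgp]
    (α : M →* A) (fb : P →* M) (η : M →* Mgp)

/-- The quotient map onto the log differentials. -/
noncomputable def lkMk :
    (Ω[A⁄R] × (A ⊗[ℤ] Additive Mgp)) →ₗ[A] LogKaehler R A P M Mgp α fb η :=
  Submodule.mkQ _

theorem lk_top (S : Submodule A (LogKaehler R A P M Mgp α fb η))
    (h1 : ∀ a, lkMk R A P M Mgp α fb η (KaehlerDifferential.D R A a, 0) ∈ S)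
    (h2 : ∀ x : Mgp, lkMk R A P M Mgp α fb η (0, 1 ⊗ₜ[ℤ] Additive.ofMul x) ∈ S) :
    ∀ l, l ∈ S := by
  intro l
  obtain ⟨⟨ω, t⟩, rfl⟩ : ∃ z, lkMk R A P M Mgp α fb η z = l := Submodule.mkQ_surjective _ l
  have hω : ω ∈ S.comap ((lkMk R A P M Mgp α fb η).comp (LinearMap.inl A _ _)) := by
    have : (⊤ : Submodule A (Ω[A⁄R])) ≤
        S.comap ((lkMk R A P M Mgp α fb η).comp (LinearMap.inl A _ _)) := by
      rw [← KaehlerDifferential.span_range_derivation, Submodule.span_le]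
      rintro _ ⟨a, rfl⟩
      exact h1 a
    exact this trivial
  have ht : lkMk R A P M Mgp α fb η (0, t) ∈ S := by
    induction t using TensorProduct.induction_on with
    | zero => rw [show ((0, 0) : Ω[A⁄R] × (A ⊗[ℤ] Additive Mgp)) = 0 from rfl, map_zero]; exact S.zero_mem
    | tmul a x =>
      have := S.smul_mem a (h2 x.toMul)
      rw [← map_smul] at this
      simpa [TensorProduct.smul_tmul'] using this
    | add x y hx hy =>
      have := S.add_mem hx hy
      rw [← map_add] at this
      simpa using this
  have := S.add_mem hω ht
  rw [LinearMap.comp_apply, ← map_add] at this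
  simpa using this

theorem lk_rel1 (m : M) :
    lkMk R A P M Mgp α fb η (KaehlerDifferential.D R A (α m), 0) =
      α m • lkMk R A P M Mgp α fb η (0, 1 ⊗ₜ[ℤ] Additive.ofMul (η m)) := by
  rw [← sub_eq_zero, ← map_smul, ← map_sub]
  refine (Submodule.Quotient.mk_eq_zero _).2 ?_
  refine Submodule.subset_span (Or.inl ⟨m, ?_⟩)
  simp [TensorProduct.smul_tmul']

theorem lk_rel2 (p : P) :
    lkMk R A P M Mgp α fb η (0, 1 ⊗ₜ[ℤ] Additive.ofMul (η (fb p))) = 0 := by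
  refine (Submodule.Quotient.mk_eq_zero _).2 ?_
  exact Submodule.subset_span (Or.inr ⟨p, rfl⟩)

theorem lk_lift (N : Type u) [AddCommGroup N] [Module A N] (d : A →+ N)
    (hd : ∀ a b, d (a * b) = a • d b + b • d a)
    (hdR : ∀ r, d (algebraMap R A r) = 0)
    (φ : Additive Mgp →+ N)
    (h1 : ∀ m, d (α m) = α m • φ (Additive.ofMul (η m)))
    (h2 : ∀ p, φ (Additive.ofMul (η (fb p))) = 0) :
    ∃ F : LogKaehler R A P M Mgp α fb η →ₗ[A] N,
      (∀ a, F (lkMk R A P M Mgp α fb η (KaehlerDifferential.D R A a, 0)) = d a) ∧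
      (∀ x : Mgp, F (lkMk R A P M Mgp α fb η (0, 1 ⊗ₜ[ℤ] Additive.ofMul x)) =
        φ (Additive.ofMul x)) := by
  letI : Module R N := Module.compHom N (algebraMap R A)
  haveI : IsScalarTower R A N := ⟨fun r a n => by
    rw [Algebra.smul_def, mul_smul]; rfl⟩
  let dl : A →ₗ[R] N :=
    { d with
      map_smul' := fun r a => by
        change d (r • a) = algebraMap R A r • d a
        rw [Algebra.smul_def, hd, hdR, smul_zero, add_zero] }
  let D : Derivation R A N := Derivation.mk' dl hd
  let T : (A ⊗[ℤ] Additive Mgp) →ₗ[A] N :=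
    TensorProduct.AlgebraTensorModule.lift
      (LinearMap.toSpanSingleton A (Additive Mgp →ₗ[ℤ] N) φ.toIntLinearMap)
  have hT : ∀ a x, T (a ⊗ₜ x) = a • φ x := fun a x => rfl
  have hD : ∀ a, D.liftKaehlerDifferential (KaehlerDifferential.D R A a) = d a := fun a =>
    D.liftKaehlerDifferential_comp_D a
  refine ⟨Submodule.liftQ _ (D.liftKaehlerDifferential.coprod T) ?_, ?_, ?_⟩
  · rw [Submodule.span_le]
    rintro _ (⟨m, rfl⟩ | ⟨p, rfl⟩)
    · simp [hD, hT, h1]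
    · simp [hT, h2]
  · intro a
    refine (Submodule.liftQ_apply _ _ _).trans ?_
    simp [hD]
  · intro a
    refine (Submodule.liftQ_apply _ _ _).trans ?_
    simp [hT]

end Helpers

/-- The pieces of the conormal sequence needed for the comparison, with the ring `C` abstract. -/
theorem lk_abstract
    (R A P M Q Mgp Qgp : Type u) [CommRing R] [CommRing A] [Algebra R A]
    [CommMonoid P] [CommMonoid M] [CommMonoid Q] [CommGroup Mgp] [CommGroup Qgp]
    (fb : P →* M) (α : M →* A)
    (i₁ i₂ : M →* Q) (hQ : IsCommMonoidPushout fb fb i₁ i₂)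
    (μ : Q →* M) (hμ₁ : μ.comp i₁ = MonoidHom.id M) (hμ₂ : μ.comp i₂ = MonoidHom.id M)
    (η : M →* Mgp) (hη : IsGroupCompletion η)
    (ηQ : Q →* Qgp) (hηQ : IsGroupCompletion ηQ)
    (μgp : Qgp →* Mgp) (hμgp : μgp.comp ηQ = η.comp μ)
    (rep : Submonoid (M × Qgp)) (hrep : rep = pullbackSubmonoid η μgp)
    (ρ : Q →* rep) (hρ : ∀ x : Q, (ρ x : M × Qgp) = (μ x, ηQ x))
    (C : Type u) [CommRing C] (u v : A →+* C) (w : rep →* C) (ε : C →+* A)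
    (I : Ideal C) (hI : ∀ c, c ∈ I ↔ ε c = 0)
    (huv : ∀ r : R, u (algebraMap R A r) = v (algebraMap R A r))
    (hw₁ : ∀ m, w (ρ (i₁ m)) = u (α m)) (hw₂ : ∀ m, w (ρ (i₂ m)) = v (α m))
    (hεu : ∀ a, ε (u a) = a) (hεv : ∀ a, ε (v a) = a)
    (hεw : ∀ x, ε (w x) = α (x : M × Qgp).1)
    (hgen : ∀ S : Subring C, (∀ a, u a ∈ S) → (∀ a, v a ∈ S) → (∀ x, w x ∈ S) → ∀ c, c ∈ S)
    (huniv : ∀ (T : Type u) [CommRing T] (g₁ g₂ : A →+* T) (h : rep →* T),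
      (∀ r : R, g₁ (algebraMap R A r) = g₂ (algebraMap R A r)) →
      (∀ m, h (ρ (i₁ m)) = g₁ (α m)) → (∀ m, h (ρ (i₂ m)) = g₂ (α m)) →
      ∃ Φ : C →+* T, (∀ a, Φ (u a) = g₁ a) ∧ (∀ a, Φ (v a) = g₂ a) ∧ ∀ x, Φ (w x) = h x) :
    letI : Module A I.Cotangent := Module.compHom _ u
    Nonempty ((LogKaehler R A P M Mgp α fb η) ≃ₗ[A] I.Cotangent) := by
  letI : Module A I.Cotangent := Module.compHom _ u
  have smul_def : ∀ (a : A) (x : I.Cotangent), a • x = u a • x := fun a x => rfl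
  have csmul : ∀ (c : C) (x : I.Cotangent), c • x = ε c • x := by
    intro c x
    rw [smul_def, ← sub_eq_zero, ← sub_smul]
    apply Ideal.Cotangent.smul_eq_zero_of_mem
    simp [hI, hεu]
  -- the universal derivation `δ c = [c - u (ε c)]`
  let δ : C →+ I.Cotangent :=
    { toFun := fun c => I.toCotangent ⟨c - u (ε c), by simp [hI, hεu]⟩
      map_zero' := by
        rw [Ideal.toCotangent_eq_zero]; simp
      map_add' := by
        intro x y
        rw [← map_add, Ideal.toCotangent_eq]
        convert (I ^ 2).zero_mem using 1
        simp only [map_add, Submodule.coe_add]; ring }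
  have hδ : ∀ c, δ c = I.toCotangent ⟨c - u (ε c), by simp [hI, hεu]⟩ :=
    fun c => rfl
  have δmul : ∀ x y, δ (x * y) = ε x • δ y + ε y • δ x := by
    intro x y
    rw [← csmul, smul_def, hδ, hδ, hδ, ← map_smul, ← map_smul, ← map_add, Ideal.toCotangent_eq]
    convert (I ^ 2).zero_mem using 1
    simp only [map_mul, Submodule.coe_add, Submodule.coe_smul, smul_eq_mul]; ring
  have δu : ∀ a, δ (u a) = 0 := by
    intro a
    rw [hδ, Ideal.toCotangent_eq_zero]; simp [hεu]
  have δone : δ 1 = 0 := by simpa using δu 1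
  have hδI : ∀ c (hc : c ∈ I), δ c = I.toCotangent ⟨c, hc⟩ := by
    intro c hc
    rw [hδ, Ideal.toCotangent_eq]
    have : ε c = 0 := (hI c).1 hc
    simp [this]
  -- group completions of `i₁, i₂`
  obtain ⟨j₁, hj₁, -⟩ := hη Qgp (ηQ.comp i₁)
  obtain ⟨j₂, hj₂, -⟩ := hη Qgp (ηQ.comp i₂)
  have hj₁' : ∀ m, j₁ (η m) = ηQ (i₁ m) := fun m => DFunLike.congr_fun hj₁ m
  have hj₂' : ∀ m, j₂ (η m) = ηQ (i₂ m) := fun m => DFunLike.congr_fun hj₂ m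
  have hμ' : ∀ q, μgp (ηQ q) = η (μ q) := fun q => DFunLike.congr_fun hμgp q
  have hμ₁' : ∀ m, μ (i₁ m) = m := fun m => DFunLike.congr_fun hμ₁ m
  have hμ₂' : ∀ m, μ (i₂ m) = m := fun m => DFunLike.congr_fun hμ₂ m
  have hηext : ∀ {H : Type u} [CommGroup H] (a b : Mgp →* H), a.comp η = b.comp η → a = b :=
    fun a b hab => (hη _ (b.comp η)).unique hab rfl
  have hηQext : ∀ {H : Type u} [CommGroup H] (a b : Qgp →* H),
      a.comp ηQ = b.comp ηQ → a = b :=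
    fun a b hab => (hηQ _ (b.comp ηQ)).unique hab rfl
  have hQext : ∀ {H : Type u} [CommMonoid H] (a b : Q →* H),
      (∀ m, a (i₁ m) = b (i₁ m)) → (∀ m, a (i₂ m) = b (i₂ m)) → a = b := by
    intro H _ a b h1 h2
    refine (hQ.2 H (b.comp i₁) (b.comp i₂) ?_).unique ⟨MonoidHom.ext h1, MonoidHom.ext h2⟩
      ⟨rfl, rfl⟩
    rw [MonoidHom.comp_assoc, MonoidHom.comp_assoc, hQ.1]
  have hPQ : ∀ p, i₁ (fb p) = i₂ (fb p) := fun p => DFunLike.congr_fun hQ.1 p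
  have hμj₁ : μgp.comp j₁ = MonoidHom.id Mgp := by
    apply hηext; ext m; simp [hj₁', hμ', hμ₁']
  have hμj₂ : μgp.comp j₂ = MonoidHom.id Mgp := by
    apply hηext; ext m; simp [hj₂', hμ', hμ₂']
  have hμj₁' : ∀ x, μgp (j₁ x) = x := fun x => DFunLike.congr_fun hμj₁ x
  have hμj₂' : ∀ x, μgp (j₂ x) = x := fun x => DFunLike.congr_fun hμj₂ x
  let k : Mgp →* Qgp := j₂ / j₁
  have hk : ∀ x, k x = j₂ x / j₁ x := fun x => rfl
  have hkmem : ∀ x, ((1 : M), k x) ∈ rep := by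
    intro x
    rw [hrep]
    change η 1 = μgp (k x)
    simp [hk, hμj₁', hμj₂']
  let κ : Mgp →* rep :=
    { toFun := fun x => ⟨(1, k x), hkmem x⟩
      map_one' := by ext <;> simp
      map_mul' := by intro x y; ext <;> simp }
  have hεκ : ∀ x, ε (w (κ x)) = 1 := by
    intro x
    rw [hεw]
    exact map_one α
  let φ : Additive Mgp →+ I.Cotangent :=
    { toFun := fun x => δ (w (κ x.toMul))
      map_zero' := by simp [δone]
      map_add' := by
        intro x y
        rw [toMul_add, map_mul, map_mul, δmul, hεκ, hεκ, one_smul, one_smul, add_comm] }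
  have hφ : ∀ x : Mgp, φ (Additive.ofMul x) = δ (w (κ x)) := fun x => rfl
  have hρκ : ∀ m, ρ (i₂ m) = ρ (i₁ m) * κ (η m) := by
    intro m
    apply Subtype.ext
    rw [Submonoid.coe_mul, hρ, hρ]
    change _ = (μ (i₁ m) * 1, ηQ (i₁ m) * (j₂ (η m) / j₁ (η m)))
    rw [hj₁', hj₂', hμ₁', hμ₂', mul_one, mul_div_cancel]
  obtain ⟨F, hF1, hF2⟩ := lk_lift R A P M Mgp α fb η I.Cotangent (δ.comp v.toAddMonoidHom)
    (by
      intro a b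
      change δ (v (a * b)) = a • δ (v b) + b • δ (v a)
      rw [map_mul, δmul, hεv, hεv])
    (by
      intro r
      change δ (v _) = 0
      rw [← huv, δu])
    φ
    (by
      intro m
      change δ (v _) = _
      rw [← hw₂, hρκ, map_mul, δmul, hw₁, δu, smul_zero, add_zero, hεu, hφ])
    (by
      intro p
      rw [hφ]
      have : κ (η (fb p)) = 1 := by
        apply Subtype.ext
        change ((1 : M), j₂ (η (fb p)) / j₁ (η (fb p))) = (1, 1)
        rw [hj₁', hj₂', hPQ, div_self']
      rw [this, map_one, δone])
  replace hF1 : ∀ a, F (lkMk R A P M Mgp α fb η (KaehlerDifferential.D R A a, 0)) = δ (v a) := hF1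
  -- surjectivity
  have hker : ∀ q : Qgp, ∃ x, k x = q / j₁ (μgp q) := by
    let S : Subgroup Qgp := k.range.comap (MonoidHom.id Qgp / j₁.comp μgp)
    have h : QuotientGroup.mk' S = 1 := by
      apply hηQext
      apply hQext
      · intro m
        change ((ηQ (i₁ m) : Qgp) : Qgp ⧸ S) = 1
        rw [QuotientGroup.eq_one_iff]
        refine ⟨1, ?_⟩
        simp [hμ', hμ₁', hj₁']
      · intro m
        change ((ηQ (i₂ m) : Qgp) : Qgp ⧸ S) = 1
        rw [QuotientGroup.eq_one_iff]
        refine ⟨η m, ?_⟩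
        simp [hμ', hμ₂', hj₁', hj₂', hk]
    intro q
    have : (q : Qgp ⧸ S) = 1 := DFunLike.congr_fun h q
    rw [QuotientGroup.eq_one_iff] at this
    exact this
  have hsurj : Function.Surjective F := by
    let S : Subring C :=
      { carrier := {c | δ c ∈ LinearMap.range F}
        zero_mem' := by
          change δ 0 ∈ LinearMap.range F
          rw [map_zero]; exact zero_mem _
        one_mem' := by
          change δ 1 ∈ LinearMap.range F
          rw [δone]; exact zero_mem _
        add_mem' := by
          intro a b ha hb
          change δ (a + b) ∈ LinearMap.range F
          rw [map_add]; exact add_mem ha hb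
        neg_mem' := by
          intro a ha
          change δ (-a) ∈ LinearMap.range F
          rw [map_neg]; exact neg_mem ha
        mul_mem' := by
          intro a b ha hb
          change δ (a * b) ∈ LinearMap.range F
          rw [δmul]
          exact add_mem (Submodule.smul_mem _ _ hb) (Submodule.smul_mem _ _ ha) }
    have hS : ∀ c, c ∈ S := by
      apply hgen S
      · intro a
        change δ (u a) ∈ LinearMap.range F
        rw [δu]; exact zero_mem _
      · intro a
        exact ⟨_, hF1 a⟩
      · rintro ⟨⟨m, q⟩, hmq⟩
        have hmq' : η m = μgp q := by rw [hrep] at hmq; exact hmq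
        obtain ⟨x, hx⟩ := hker q
        have : (⟨(m, q), hmq⟩ : rep) = ρ (i₁ m) * κ x := by
          apply Subtype.ext
          rw [Submonoid.coe_mul, hρ]
          change _ = (μ (i₁ m) * 1, ηQ (i₁ m) * k x)
          rw [hx, ← hmq', hj₁', hμ₁', mul_one, mul_div_cancel]
        change δ (w _) ∈ LinearMap.range F
        rw [this, map_mul, δmul, hw₁, δu, smul_zero, add_zero]
        exact Submodule.smul_mem _ _ ⟨_, hF2 x⟩
    intro y
    obtain ⟨⟨c, hc⟩, rfl⟩ := I.toCotangent_surjective y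
    obtain ⟨l, hl⟩ := hS c
    exact ⟨l, by rw [hl, hδI c hc]⟩
  -- injectivity
  have hinj : Function.Injective F := by
    let L := LogKaehler R A P M Mgp α fb η
    let mk := lkMk R A P M Mgp α fb η
    let D := KaehlerDifferential.D R A
    letI : Module Aᵐᵒᵖ L := Module.compHom _ ((RingHom.id A).fromOpposite mul_comm)
    haveI : IsCentralScalar A L := ⟨fun _ _ => rfl⟩
    let ℓ : Mgp →* Multiplicative L :=
      { toFun := fun x => Multiplicative.ofAdd (mk (0, 1 ⊗ₜ[ℤ] Additive.ofMul x))
        map_one' := by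
          rw [ofMul_one, TensorProduct.tmul_zero]; exact congrArg _ (map_zero mk)
        map_mul' := by
          intro x y
          rw [ofMul_mul, TensorProduct.tmul_add, ← ofAdd_add, ← map_add]
          simp }
    have hℓ : ∀ x, (ℓ x).toAdd = mk (0, 1 ⊗ₜ[ℤ] Additive.ofMul x) := fun x => rfl
    obtain ⟨lamQ, ⟨hlq₁, hlq₂⟩, -⟩ := hQ.2 (Multiplicative L) 1 (ℓ.comp η) (by
      ext p
      exact (lk_rel2 R A P M Mgp α fb η p).symm)
    obtain ⟨lam, hlam, -⟩ := hηQ (Multiplicative L) lamQ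
    have hl₁ : ∀ m, lam (ηQ (i₁ m)) = 1 := fun m => by
      rw [← MonoidHom.comp_apply, hlam]; exact DFunLike.congr_fun hlq₁ m
    have hl₂ : ∀ m, lam (ηQ (i₂ m)) = ℓ (η m) := fun m => by
      rw [← MonoidHom.comp_apply, hlam]; exact DFunLike.congr_fun hlq₂ m
    have hlk : ∀ x, lam (k x) = ℓ x := by
      have : lam.comp k = ℓ := by
        apply hηext
        ext m
        simp [hk, hj₁', hj₂', hl₁, hl₂]
      exact fun x => DFunLike.congr_fun this x
    let g₂ : A →+* TrivSqZeroExt A L :=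
      { toFun := fun a => TrivSqZeroExt.inl a + TrivSqZeroExt.inr (mk (D a, 0))
        map_one' := by
          rw [D.map_one_eq_zero]
          have : mk (0, 0) = 0 := map_zero mk
          simp [this]
        map_zero' := by
          rw [map_zero]
          have : mk (0, 0) = 0 := map_zero mk
          simp [this]
        map_add' := by
          intro a b
          have : mk (D (a + b), 0) = mk (D a, 0) + mk (D b, 0) := by
            rw [← map_add]; simp
          ext
          · simp
          · simpa using this
        map_mul' := by
          intro a b
          have : mk (D (a * b), 0) = a • mk (D b, 0) + b • mk (D a, 0) := by
            rw [← map_smul, ← map_smul, ← map_add]; simp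
          ext
          · simp
          · simpa using this }
    let h : rep →* TrivSqZeroExt A L :=
      { toFun := fun x => TrivSqZeroExt.inl (α (x : M × Qgp).1) *
          (1 + TrivSqZeroExt.inr (lam (x : M × Qgp).2).toAdd)
        map_one' := by simp
        map_mul' := by
          intro x y
          have h0 := TrivSqZeroExt.inr_mul_inr A (lam (x : M × Qgp).2).toAdd
            (lam (y : M × Qgp).2).toAdd
          rw [Submonoid.coe_mul, Prod.fst_mul, Prod.snd_mul, map_mul, map_mul, toAdd_mul,
            TrivSqZeroExt.inl_mul, TrivSqZeroExt.inr_add]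
          linear_combination (-(TrivSqZeroExt.inl (α (x : M × Qgp).1) *
            TrivSqZeroExt.inl (α (y : M × Qgp).1))) * h0 }
    have hg₂ : ∀ a, g₂ a = TrivSqZeroExt.inl a + TrivSqZeroExt.inr (mk (D a, 0)) := fun a => rfl
    have hh : ∀ x : rep, h x = TrivSqZeroExt.inl (α (x : M × Qgp).1) *
          (1 + TrivSqZeroExt.inr (lam (x : M × Qgp).2).toAdd) := fun x => rfl
    obtain ⟨Φ, hΦu, hΦv, hΦw⟩ := huniv (TrivSqZeroExt A L) (TrivSqZeroExt.inlHom A L) g₂ h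
      (by
        intro r
        rw [hg₂, D.map_algebraMap]
        have : mk (0, 0) = 0 := map_zero mk
        simp [this])
      (by
        intro m
        rw [hh, hρ, hl₁, hμ₁']
        simp)
      (by
        intro m
        rw [hh, hg₂, hρ, hl₂, hμ₂', hℓ, lk_rel1]
        ext <;> simp [mk])
    have hfst : ∀ c, (Φ c).fst = ε c := by
      let S : Subring C := RingHom.eqLocus
        ((TrivSqZeroExt.fstHom A A L).toRingHom.comp Φ) ε
      apply hgen S
      · intro a
        change (Φ (u a)).fst = ε (u a)
        rw [hΦu, hεu]; rfl
      · intro a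
        change (Φ (v a)).fst = ε (v a)
        rw [hΦv, hεv]; simp [g₂]
      · intro x
        change (Φ (w x)).fst = ε (w x)
        rw [hΦw, hεw]; simp [h]
    have hsq : ∀ c ∈ I ^ 2, (Φ c).snd = 0 := by
      intro c hc
      rw [pow_two] at hc
      refine Submodule.mul_induction_on hc ?_ ?_
      · intro x hx y hy
        have hx' : ε x = 0 := (hI x).1 hx
        have hy' : ε y = 0 := (hI y).1 hy
        simp [hfst, hx', hy']
      · intro x y hx hy
        simp [hx, hy]
    let S : Submodule A L :=
      { carrier := {l | ∃ c, ∃ hc : c ∈ I, I.toCotangent ⟨c, hc⟩ = F l ∧ (Φ c).snd = l}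
        zero_mem' := ⟨0, I.zero_mem, by
          rw [map_zero, Ideal.toCotangent_eq_zero]; exact (I ^ 2).zero_mem, by simp⟩
        add_mem' := by
          rintro a b ⟨c, hc, h1, h2⟩ ⟨c', hc', h1', h2'⟩
          refine ⟨c + c', I.add_mem hc hc', ?_, by simp [h2, h2']⟩
          rw [map_add, ← h1, ← h1', ← map_add]; rfl
        smul_mem' := by
          rintro a l ⟨c, hc, h1, h2⟩
          refine ⟨u a * c, I.mul_mem_left _ hc, ?_, ?_⟩
          · rw [map_smul, ← h1, smul_def, ← map_smul]; rfl
          · rw [map_mul, hΦu]; simp [h2] }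
    have hS : ∀ l, l ∈ S := by
      apply lk_top
      · intro a
        have hc : v a - u a ∈ I := by simp [hI, hεu, hεv]
        refine ⟨v a - u a, hc, ?_, ?_⟩
        · rw [hF1, ← hδI, map_sub, δu, sub_zero]
        · rw [map_sub, hΦu, hΦv]; simp [g₂, mk, D]
      · intro x
        have hc : w (κ x) - 1 ∈ I := by simp [hI, hεκ]
        refine ⟨w (κ x) - 1, hc, ?_, ?_⟩
        · rw [hF2, ← hδI, map_sub, δone, sub_zero, hφ]
        · rw [map_sub, hΦw, map_one]
          change (TrivSqZeroExt.inl (α 1) *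
            (1 + TrivSqZeroExt.inr (lam (k x)).toAdd) - 1 : TrivSqZeroExt A L).snd = _
          rw [hlk, hℓ]; simp [mk]
    rw [injective_iff_map_eq_zero]
    intro l hl
    obtain ⟨c, hc, h1, h2⟩ := hS l
    rw [hl, Ideal.toCotangent_eq_zero] at h1
    rw [← h2, hsq c h1]
  exact ⟨LinearEquiv.ofBijective F ⟨hinj, hsurj⟩⟩

/-- For a map `(f, f♭) : (R, P) → (A, M)` of pre-log rings, the module of log
Kähler differentials `Ω¹_{(A,M)|(R,P)}` is isomorphic, as an `A`-module, to
`I/I²`, where `I` is the kernel of the augmentation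
`ε : C = (A ⊗_R A) ⊗_{ℤ[M ⊕_P M]} ℤ[(M ⊕_P M)^rep] → A`. -/
theorem logKaehler_iso_conormal
    (R A P M Q Mgp Qgp : Type u) [CommRing R] [CommRing A]
    [CommMonoid P] [CommMonoid M] [CommMonoid Q] [CommGroup Mgp] [CommGroup Qgp]
    -- the map of pre-log rings
    (f : R →+* A) (fb : P →* M) (β : P →* R) (α : M →* A)
    (hcompat : ∀ p : P, α (fb p) = f (β p))
    -- `Q = M ⊕_P M`, the pushout in commutative monoids of `M ← P → M`
    (i₁ i₂ : M →* Q) (hQ : IsCommMonoidPushout fb fb i₁ i₂)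
    -- `μ : M ⊕_P M → M` is the codiagonal
    (μ : Q →* M) (hμ₁ : μ.comp i₁ = MonoidHom.id M) (hμ₂ : μ.comp i₂ = MonoidHom.id M)
    -- group completions of `M` and of `M ⊕_P M`
    (η : M →* Mgp) (hη : IsGroupCompletion η)
    (ηQ : Q →* Qgp) (hηQ : IsGroupCompletion ηQ)
    -- `μ^gp : (M ⊕_P M)^gp → M^gp`
    (μgp : Qgp →* Mgp) (hμgp : μgp.comp ηQ = η.comp μ) :
    -- `A` is an `R`-algebra via `f`
    letI : Algebra R A := f.toAlgebra
    -- the repletion `(M ⊕_P M)^rep` is the pullback of `η` and `μ^gp`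
    ∀ (rep : Submonoid (M × Qgp)), rep = pullbackSubmonoid η μgp →
    -- the canonical map `M ⊕_P M → (M ⊕_P M)^rep`
    ∀ (ρ : Q →* rep), (∀ x : Q, (ρ x : M × Qgp) = (μ x, ηQ x)) →
    -- the monoid map `M ⊕_P M → (A ⊗_R A, ·)` with components
    -- `m ↦ α(m) ⊗ 1` and `m ↦ 1 ⊗ α(m)`
    ∀ (θ : Q →* (A ⊗[R] A)),
      (∀ m : M, θ (i₁ m) = α m ⊗ₜ[R] 1) → (∀ m : M, θ (i₂ m) = 1 ⊗ₜ[R] α m) →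
    -- the induced ring map `ℤ[M ⊕_P M] → A ⊗_R A`
    ∀ (ψ : MonoidAlgebra ℤ Q →+* (A ⊗[R] A)),
      (∀ x : Q, ψ (MonoidAlgebra.single x 1) = θ x) →
    -- the ring map `ℤ[M ⊕_P M] → ℤ[(M ⊕_P M)^rep]` induced by `ρ`
    ∀ (χ : MonoidAlgebra ℤ Q →+* MonoidAlgebra ℤ ↥rep),
      (∀ x : Q, χ (MonoidAlgebra.single x 1) = MonoidAlgebra.single (ρ x) 1) →
    letI : Algebra (MonoidAlgebra ℤ Q) (A ⊗[R] A) := ψ.toAlgebra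
    letI : Algebra (MonoidAlgebra ℤ Q) (MonoidAlgebra ℤ ↥rep) := χ.toAlgebra
    -- the augmentation `ε : C → A`, induced by the multiplication of `A ⊗_R A`
    -- and by `α` composed with the projection `(M ⊕_P M)^rep → M`
    ∀ (ε : ((A ⊗[R] A) ⊗[MonoidAlgebra ℤ Q] MonoidAlgebra ℤ ↥rep) →+* A),
      (∀ (a b : A) (w : rep),
        ε ((a ⊗ₜ[R] b) ⊗ₜ[MonoidAlgebra ℤ Q] MonoidAlgebra.single w 1) =
          a * b * α (w : M × Qgp).1) →
    -- the unit `A → C`, making `I/I²` an `A`-module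
    ∀ (u : A →+* ((A ⊗[R] A) ⊗[MonoidAlgebra ℤ Q] MonoidAlgebra ℤ ↥rep)),
      (∀ a : A, u a = (a ⊗ₜ[R] (1 : A)) ⊗ₜ[MonoidAlgebra ℤ Q] (1 : MonoidAlgebra ℤ ↥rep)) →
    letI : Module A (RingHom.ker ε).Cotangent := Module.compHom _ u
    Nonempty ((LogKaehler R A P M Mgp α fb η) ≃ₗ[A] (RingHom.ker ε).Cotangent) := by
  letI : Algebra R A := f.toAlgebra
  intro rep hrep ρ hρ θ hθ₁ hθ₂ ψ hψ χ hχ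
  letI : Algebra (MonoidAlgebra ℤ Q) (A ⊗[R] A) := ψ.toAlgebra
  letI : Algebra (MonoidAlgebra ℤ Q) (MonoidAlgebra ℤ ↥rep) := χ.toAlgebra
  intro ε hε u hu
  let inl : (A ⊗[R] A) →+* ((A ⊗[R] A) ⊗[MonoidAlgebra ℤ Q] MonoidAlgebra ℤ ↥rep) :=
    Algebra.TensorProduct.includeLeftRingHom
  let inr : MonoidAlgebra ℤ ↥rep →+* ((A ⊗[R] A) ⊗[MonoidAlgebra ℤ Q] MonoidAlgebra ℤ ↥rep) :=
    (Algebra.TensorProduct.includeRight (R := MonoidAlgebra ℤ Q) (A := A ⊗[R] A)).toRingHom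
  have hinl : ∀ z, inl z = z ⊗ₜ[MonoidAlgebra ℤ Q] 1 := fun z => rfl
  have hinr : ∀ z, inr z = 1 ⊗ₜ[MonoidAlgebra ℤ Q] z := fun z => rfl
  have hlr : ∀ z, inl (ψ z) = inr (χ z) := by
    intro z
    exact (Algebra.TensorProduct.includeLeft (R := MonoidAlgebra ℤ Q)
      (S := MonoidAlgebra ℤ Q) (A := A ⊗[R] A) (B := MonoidAlgebra ℤ ↥rep)).commutes z |>.trans
      ((Algebra.TensorProduct.includeRight (R := MonoidAlgebra ℤ Q) (A := A ⊗[R] A)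
        (B := MonoidAlgebra ℤ ↥rep)).commutes z).symm
  let v : A →+* ((A ⊗[R] A) ⊗[MonoidAlgebra ℤ Q] MonoidAlgebra ℤ ↥rep) :=
    inl.comp (Algebra.TensorProduct.includeRight (R := R) (A := A) (B := A)).toRingHom
  have hv : ∀ a, v a = inl (1 ⊗ₜ[R] a) := fun a => rfl
  have hu' : ∀ a, u a = inl (a ⊗ₜ[R] 1) := hu
  let w : rep →* ((A ⊗[R] A) ⊗[MonoidAlgebra ℤ Q] MonoidAlgebra ℤ ↥rep) :=
    inr.toMonoidHom.comp (MonoidAlgebra.of ℤ rep)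
  have hw : ∀ x, w x = inr (MonoidAlgebra.single x 1) := fun x => rfl
  have hwρ : ∀ x, w (ρ x) = inl (θ x) := by
    intro x
    rw [hw, ← hχ, ← hlr, hψ]
  have hone : (1 : MonoidAlgebra ℤ ↥rep) = MonoidAlgebra.single 1 1 := rfl
  have hone' : (1 : A ⊗[R] A) = 1 ⊗ₜ[R] 1 := rfl
  refine lk_abstract R A P M Q Mgp Qgp fb α i₁ i₂ hQ μ hμ₁ hμ₂ η hη ηQ hηQ μgp hμgp rep hrep ρ hρ
    ((A ⊗[R] A) ⊗[MonoidAlgebra ℤ Q] MonoidAlgebra ℤ ↥rep) u v w ε (RingHom.ker ε)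
    (fun c => RingHom.mem_ker) ?_ ?_ ?_ ?_ ?_ ?_ ?_ ?_
  · intro r
    rw [hu', hv, Algebra.algebraMap_eq_smul_one, TensorProduct.smul_tmul]
  · intro m
    rw [hwρ, hθ₁, hu']
  · intro m
    rw [hwρ, hθ₂, hv]
  · intro a
    rw [hu, hone, hε]; simp
  · intro a
    rw [hv, hinl, hone, hε]; simp
  · intro x
    rw [hw, hinr, hone', hε]; simp
  · intro S h1 h2 h3 c
    have hl : ∀ z, inl z ∈ S := by
      intro z
      induction z using TensorProduct.induction_on with
      | zero => rw [map_zero]; exact S.zero_mem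
      | tmul a b =>
        have : inl (a ⊗ₜ[R] b) = u a * v b := by
          rw [hu', hv, ← map_mul, Algebra.TensorProduct.tmul_mul_tmul, mul_one, one_mul]
        rw [this]; exact S.mul_mem (h1 a) (h2 b)
      | add x y hx hy => rw [map_add]; exact S.add_mem hx hy
    have hr : ∀ z, inr z ∈ S := by
      intro z
      induction z using MonoidAlgebra.induction_on with
      | of m => exact h3 m
      | add x y hx hy => rw [map_add]; exact S.add_mem hx hy
      | smul n x hx => rw [map_zsmul]; exact S.zsmul_mem hx n
    induction c using TensorProduct.induction_on with
    | zero => exact S.zero_mem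
    | tmul a b =>
      have : a ⊗ₜ[MonoidAlgebra ℤ Q] b = inl a * inr b := by
        rw [hinl, hinr, Algebra.TensorProduct.tmul_mul_tmul, mul_one, one_mul]
      rw [this]; exact S.mul_mem (hl a) (hr b)
    | add x y hx hy => exact S.add_mem hx hy
  · intro T _ g₁ g₂ h hg hh₁ hh₂
    letI : Algebra R T := (g₁.comp f).toAlgebra
    let G₁ : A →ₐ[R] T := { g₁ with commutes' := fun r => rfl }
    let G₂ : A →ₐ[R] T := { g₂ with commutes' := fun r => (hg r).symm }
    let a : (A ⊗[R] A) →+* T := (Algebra.TensorProduct.productMap G₁ G₂).toRingHom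
    have ha : ∀ x y, a (x ⊗ₜ[R] y) = g₁ x * g₂ y := fun x y =>
      Algebra.TensorProduct.productMap_apply_tmul G₁ G₂ x y
    let b : MonoidAlgebra ℤ ↥rep →+* T := (MonoidAlgebra.lift ℤ T ↥rep h).toRingHom
    have hb : ∀ x, b (MonoidAlgebra.single x 1) = h x := by
      intro x
      refine (MonoidAlgebra.lift_single h x (1 : ℤ)).trans ?_
      simp
    have haθ : a.toMonoidHom.comp θ = h.comp ρ := by
      refine (hQ.2 T ((h.comp ρ).comp i₁) ((h.comp ρ).comp i₂) ?_).unique ⟨?_, ?_⟩ ⟨rfl, rfl⟩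
      · rw [MonoidHom.comp_assoc, MonoidHom.comp_assoc, hQ.1]; rfl
      · ext m
        change a (θ (i₁ m)) = h (ρ (i₁ m))
        rw [hθ₁, ha, hh₁, map_one, mul_one]
      · ext m
        change a (θ (i₂ m)) = h (ρ (i₂ m))
        rw [hθ₂, ha, hh₂, map_one, one_mul]
    have hab : ∀ z, a (ψ z) = b (χ z) := by
      intro z
      induction z using MonoidAlgebra.induction_on with
      | of m =>
        change a (ψ (MonoidAlgebra.single m 1)) = b (χ (MonoidAlgebra.single m 1))
        rw [hψ, hχ, hb]
        exact DFunLike.congr_fun haθ m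
      | add x y hx hy => rw [map_add, map_add, map_add, map_add, hx, hy]
      | smul n x hx => rw [map_zsmul, map_zsmul, map_zsmul, map_zsmul, hx]
    letI : Algebra (MonoidAlgebra ℤ Q) T := (a.comp ψ).toAlgebra
    let a' : (A ⊗[R] A) →ₐ[MonoidAlgebra ℤ Q] T := { a with commutes' := fun r => rfl }
    let b' : MonoidAlgebra ℤ ↥rep →ₐ[MonoidAlgebra ℤ Q] T :=
      { b with commutes' := fun r => (hab r).symm }
    let Φ := (Algebra.TensorProduct.productMap a' b').toRingHom
    have hΦ : ∀ x y, Φ (x ⊗ₜ[MonoidAlgebra ℤ Q] y) = a x * b y := fun x y =>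
      Algebra.TensorProduct.productMap_apply_tmul a' b' x y
    refine ⟨Φ, ?_, ?_, ?_⟩
    · intro x
      rw [hu, hΦ, ha, map_one, map_one, mul_one, mul_one]
    · intro x
      rw [hv, hinl, hΦ, ha, map_one, map_one, one_mul, mul_one]
    · intro x
      rw [hw, hinr, hΦ, map_one, hb, one_mul]
end

section
/- Let (f, f♭) : (R, P) → (A, M) be a map of pre-log rings and let X be an A-module. Let C = (A ⊗_R A) ⊗_{ℤ[M ⊕_P M]} ℤ[(M ⊕_P M)^rep] be the augmented commutative A-algebra with augmentation ε : C → A and augmentation ideal I = ker(ε), constructed as follows: M ⊕_P M is the pushout in commutative monoids of M ← P → M (both legs f♭), μ : M ⊕_P M → M is the codiagonal, (M ⊕_P M)^rep is the pullback of η : M → M^gp and μ^gp : (M ⊕_P M)^gp → M^gp, the map ℤ[M ⊕_P M] → A ⊗_R A is induced by m ↦ α(m) ⊗ 1 and m ↦ 1 ⊗ α(m), the map ℤ[M ⊕_P M] → ℤ[(M ⊕_P M)^rep] is induced by the canonical map into the repletion, and ε is induced by the multiplication A ⊗_R A → A and by α composed with the pullback projection (M ⊕_P M)^rep → M. Then there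 is a bijection, natural in X, between the set of log derivations of (A, M) over (R, P) with values in X and the set of A-module homomorphisms I/I² → X. -/
open scoped TensorProduct

universe u

/-- A log derivation of a pre-log ring `(A, M, α)` over `(R, P)` (relative to
`f : R → A` and `f♭ : P → M`) with values in an `A`-module `X`: a pair
`(D, δ)` where `D : A → X` is an `R`-linear derivation, `δ : M → X` is a
monoid homomorphism from the multiplicative monoid `M` to the additive monoid
of `X` vanishing on `P`, and `D(α m) = α(m) · δ(m)` for all `m`. -/
structure LogDerivation (R A P M : Type u) [CommRing R] [CommRing A]
    [CommMonoid P] [CommMonoid M] (f : R →+* A) (fb : P →* M) (α : M →* A)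
    (X : Type u) [AddCommGroup X] [Module A X] : Type u where
  D : A → X
  δ : M → X
  D_add : ∀ a b : A, D (a + b) = D a + D b
  D_smul : ∀ (r : R) (a : A), D (f r * a) = f r • D a
  leibniz : ∀ a b : A, D (a * b) = a • D b + b • D a
  delta_one : δ 1 = 0
  delta_mul : ∀ m m' : M, δ (m * m') = δ m + δ m'
  delta_base : ∀ p : P, δ (fb p) = 0
  compat : ∀ m : M, D (α m) = α m • δ m

/-- Pushforward of a log derivation along an `A`-module map. -/
def LogDerivation.map {R A P M : Type u} [CommRing R] [CommRing A]
    [CommMonoid P] [CommMonoid M] {f : R →+* A} {fb : P →* M} {α : M →* A}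
    {X X' : Type u} [AddCommGroup X] [Module A X] [AddCommGroup X'] [Module A X']
    (g : X →ₗ[A] X') (d : LogDerivation R A P M f fb α X) :
    LogDerivation R A P M f fb α X' where
  D := g ∘ d.D
  δ := g ∘ d.δ
  D_add a b := by simp [d.D_add]
  D_smul r a := by simp [d.D_smul]
  leibniz a b := by simp [d.leibniz]
  delta_one := by simp [d.delta_one]
  delta_mul m m' := by simp [d.delta_mul]
  delta_base p := by simp [d.delta_base]
  compat m := by simp [d.compat]

set_option linter.style.haveILetI false

namespace LogAux

/-- Additive maps satisfying Leibniz along `ε` and killing `u`. -/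
structure IsDer {A C X : Type u} [CommRing A] [CommRing C] [AddCommGroup X] [Module A X]
    (ε : C →+* A) (u : A →+* C) (Δ : C →+ X) : Prop where
  leib : ∀ c c', Δ (c * c') = ε c • Δ c' + ε c' • Δ c
  unit : ∀ a, Δ (u a) = 0

theorem IsDer.smul {A C X : Type u} [CommRing A] [CommRing C] [AddCommGroup X] [Module A X]
    {ε : C →+* A} {u : A →+* C} {Δ : C →+ X} (h : IsDer ε u Δ) (hu : ∀ a, ε (u a) = a)
    (a : A) (c : C) : Δ (u a * c) = a • Δ c := by
  rw [h.leib, h.unit, hu, smul_zero, add_zero]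

/-- the element `c - u (ε c)` of the augmentation ideal -/
def red {A C : Type u} [CommRing A] [CommRing C]
    (ε : C →+* A) (u : A →+* C) (hu : ∀ a, ε (u a) = a) (c : C) : RingHom.ker ε :=
  ⟨c - u (ε c), by rw [RingHom.mem_ker, map_sub, hu, sub_self]⟩

theorem exists_lin {A C X : Type u} [CommRing A] [CommRing C] [AddCommGroup X] [Module A X]
    (ε : C →+* A) (u : A →+* C) (hu : ∀ a, ε (u a) = a) (Δ : C →+ X) (h : IsDer ε u Δ) :
    letI : Module A (RingHom.ker ε).Cotangent := Module.compHom _ u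
    ∃ φ : (RingHom.ker ε).Cotangent →ₗ[A] X,
      ∀ c : C, φ ((RingHom.ker ε).toCotangent (red ε u hu c)) = Δ c := by
  letI : Module A (RingHom.ker ε).Cotangent := Module.compHom _ u
  let F : (RingHom.ker ε) →+ X := Δ.comp (RingHom.ker ε).toAddSubgroup.subtype
  have hF : ∀ x, F x = Δ x := fun _ => rfl
  have hk : (RingHom.ker ε • ⊤ : Submodule C (RingHom.ker ε)).toAddSubgroup ≤ F.ker := by
    intro x hx
    rw [Submodule.mem_toAddSubgroup] at hx
    rw [AddMonoidHom.mem_ker]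
    induction hx using Submodule.smul_induction_on' with
    | smul r hr n hn =>
      have h1 : ε r = 0 := hr
      have h2 : ε n = 0 := n.2
      rw [hF, Submodule.coe_smul, smul_eq_mul, h.leib, h1, h2]; simp
    | add x hx y hy h1 h2 => rw [map_add, h1, h2, add_zero]
  let G : (RingHom.ker ε).Cotangent →+ X := QuotientAddGroup.lift _ F hk
  have hG : ∀ x, G ((RingHom.ker ε).toCotangent x) = Δ x := fun x => rfl
  refine ⟨{ G with map_smul' := ?_ }, ?_⟩
  · intro a x
    obtain ⟨x, rfl⟩ := (RingHom.ker ε).toCotangent_surjective x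
    have : a • (RingHom.ker ε).toCotangent x = (RingHom.ker ε).toCotangent (u a • x) := by
      rw [map_smul]; rfl
    rw [this]
    change G _ = a • G _
    rw [hG, hG, Submodule.coe_smul, smul_eq_mul, h.smul hu]
  · intro c
    refine (hG (red ε u hu c)).trans ?_
    simp only [red]
    rw [map_sub, h.unit, sub_zero]

/-- the derivation of a linear map -/
theorem exists_der {A C X : Type u} [CommRing A] [CommRing C] [AddCommGroup X] [Module A X]
    (ε : C →+* A) (u : A →+* C) (hu : ∀ a, ε (u a) = a) :
    letI : Module A (RingHom.ker ε).Cotangent := Module.compHom _ u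
    ∀ φ : (RingHom.ker ε).Cotangent →ₗ[A] X, ∃ Δ : C →+ X, IsDer ε u Δ ∧
      ∀ c : C, Δ c = φ ((RingHom.ker ε).toCotangent (red ε u hu c)) := by
  letI : Module A (RingHom.ker ε).Cotangent := Module.compHom _ u
  intro φ
  have hsm : ∀ (a : A) (x : RingHom.ker ε), φ ((RingHom.ker ε).toCotangent (u a • x)) =
      a • φ ((RingHom.ker ε).toCotangent x) := by
    intro a x
    rw [← map_smul φ, map_smul]; rfl
  refine ⟨{ toFun := fun c => φ ((RingHom.ker ε).toCotangent (red ε u hu c)),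
            map_zero' := ?_, map_add' := ?_ }, ⟨?_, ?_⟩, fun _ => rfl⟩
  · have : red ε u hu 0 = 0 := by ext; simp [red]
    rw [this, map_zero, map_zero]
  · intro c c'
    have : red ε u hu (c + c') = red ε u hu c + red ε u hu c' := by
      ext; simp [red]; ring
    rw [this, map_add, map_add]
  · intro c c'
    change φ _ = ε c • φ _ + ε c' • φ _
    rw [← hsm, ← hsm, ← map_add, ← map_add]
    congr 1
    rw [Ideal.toCotangent_eq]
    have : ((red ε u hu (c * c') : C) -
        ((u (ε c) • red ε u hu c' + u (ε c') • red ε u hu c : RingHom.ker ε) : C)) =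
        (red ε u hu c : C) * (red ε u hu c' : C) := by
      simp [red]; ring
    rw [this, pow_two]
    exact Ideal.mul_mem_mul (red ε u hu c).2 (red ε u hu c').2
  · intro a
    change φ _ = 0
    have : red ε u hu (u a) = 0 := by ext; simp [red, hu]
    rw [this, map_zero, map_zero]

theorem lin_ext {A C X : Type u} [CommRing A] [CommRing C] [AddCommGroup X] [Module A X]
    (ε : C →+* A) (u : A →+* C) (hu : ∀ a, ε (u a) = a) :
    letI : Module A (RingHom.ker ε).Cotangent := Module.compHom _ u
    ∀ φ φ' : (RingHom.ker ε).Cotangent →ₗ[A] X,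
      (∀ c : C, φ ((RingHom.ker ε).toCotangent (red ε u hu c)) =
        φ' ((RingHom.ker ε).toCotangent (red ε u hu c))) → φ = φ' := by
  letI : Module A (RingHom.ker ε).Cotangent := Module.compHom _ u
  intro φ φ' h
  apply LinearMap.ext
  intro x
  obtain ⟨x, rfl⟩ := (RingHom.ker ε).toCotangent_surjective x
  have : red ε u hu x = x := by
    have h2 : ε x = 0 := x.2
    ext; simp [red, h2]
  rw [← this]
  exact h x

/-- A derivation-like pair yields a ring map to the square-zero extension. -/
theorem exists_der_of_lift {A C W X : Type u} [CommRing A] [CommRing C] [CommMonoid W]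
    [AddCommGroup X] [Module A X]
    (ε : C →+* A) (u j : A →+* C) (k : W →* C)
    (hu : ∀ a, ε (u a) = a) (hj : ∀ a, ε (j a) = a)
    (a₀ : W →* A) (hk : ∀ w, ε (k w) = a₀ w)
    (cond : ∀ (B : Type u) [CommRing B], (A →+* B) → (A →+* B) → (W →* B) → Prop)
    (hext : ∀ (X : Type u) [AddCommGroup X] (D D' : C →+ X),
      (∀ a b w, D (u a * j b * k w) = D' (u a * j b * k w)) → D = D')
    (hlift : ∀ (B : Type u) [CommRing B] (g₁ g₂ : A →+* B) (h : W →* B), cond B g₁ g₂ h →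
      ∃ Ψ : C →+* B, (∀ a, Ψ (u a) = g₁ a) ∧ (∀ a, Ψ (j a) = g₂ a) ∧ (∀ w, Ψ (k w) = h w))
    (D : A →+ X) (hD : ∀ a b, D (a * b) = a • D b + b • D a)
    (d : W → X) (hd1 : d 1 = 0) (hd : ∀ w w', d (w * w') = a₀ w • d w' + a₀ w' • d w)
    (hcond : ∀ (B : Type u) [CommRing B] (g₁ g₂ : A →+* B) (h : W →* B) (F : A × X → B),
      (∀ a, g₁ a = F (a, 0)) → (∀ a, g₂ a = F (a, D a)) → (∀ w, h w = F (a₀ w, d w)) →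
      cond B g₁ g₂ h) :
    ∃ Δ : C →+ X, IsDer ε u Δ ∧ (∀ a, Δ (j a) = D a) ∧ (∀ w, Δ (k w) = d w) := by
  letI : Module Aᵐᵒᵖ X := Module.compHom X ((RingHom.id A).fromOpposite mul_comm)
  haveI : IsCentralScalar A X := ⟨fun _ _ => rfl⟩
  have hD1 : D 1 = 0 := by
    have := hD 1 1
    simpa using this
  let g₁ : A →+* TrivSqZeroExt A X := TrivSqZeroExt.inlHom A X
  let g₂ : A →+* TrivSqZeroExt A X :=
    { toFun := fun a => (a, D a)
      map_one' := by
        apply TrivSqZeroExt.ext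
        · rfl
        · exact hD1
      map_zero' := by
        apply TrivSqZeroExt.ext
        · rfl
        · exact map_zero D
      map_add' := by
        intro a b
        apply TrivSqZeroExt.ext
        · rfl
        · exact map_add D a b
      map_mul' := by
        intro a b
        apply TrivSqZeroExt.ext
        · rfl
        · exact hD a b }
  let h : W →* TrivSqZeroExt A X :=
    { toFun := fun w => (a₀ w, d w)
      map_one' := by
        apply TrivSqZeroExt.ext
        · exact map_one a₀
        · exact hd1
      map_mul' := by
        intro a b
        apply TrivSqZeroExt.ext
        · exact map_mul a₀ a b
        · exact hd a b }
  obtain ⟨Ψ, h1, h2, h3⟩ := hlift (TrivSqZeroExt A X) g₁ g₂ h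
    (hcond _ g₁ g₂ h (fun x => x) (fun _ => rfl) (fun _ => rfl) (fun _ => rfl))
  have hfst : ∀ c, (Ψ c).fst = ε c := by
    have := hext A (((TrivSqZeroExt.fstHom A A X).toRingHom.comp Ψ).toAddMonoidHom)
      ε.toAddMonoidHom (by
        intro a b w
        change (Ψ (u a * j b * k w)).fst = ε (u a * j b * k w)
        rw [map_mul, map_mul, map_mul, map_mul, h1, h2, h3, hu, hj, hk]
        rfl)
    intro c
    exact DFunLike.congr_fun this c
  refine ⟨{ toFun := fun c => (Ψ c).snd, map_zero' := ?_, map_add' := ?_ }, ⟨?_, ?_⟩, ?_, ?_⟩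
  · rw [map_zero]; rfl
  · intro c c'; rw [map_add]; rfl
  · intro c c'
    change (Ψ (c * c')).snd = ε c • (Ψ c').snd + ε c' • (Ψ c).snd
    rw [map_mul, ← hfst, ← hfst]; rfl
  · intro a
    change (Ψ (u a)).snd = 0
    rw [h1]; rfl
  · intro a
    change (Ψ (j a)).snd = _
    rw [h2]; rfl
  · intro w
    change (Ψ (k w)).snd = _
    rw [h3]; rfl

theorem gp_ext {M G H : Type u} [CommMonoid M] [CommGroup G] [CommGroup H] {η : M →* G}
    (hη : IsGroupCompletion η) {g g' : G →* H} (h : ∀ m, g (η m) = g' (η m)) : g = g' := by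
  obtain ⟨x, _, hx⟩ := hη H (g.comp η)
  rw [hx g rfl, hx g' (MonoidHom.ext fun m => (h m).symm)]

theorem po_ext {P M Q H : Type u} [CommMonoid P] [CommMonoid M] [CommMonoid Q] [CommMonoid H]
    {fb : P →* M} {i₁ i₂ : M →* Q} (hQ : IsCommMonoidPushout fb fb i₁ i₂) {g g' : Q →* H}
    (h1 : ∀ m, g (i₁ m) = g' (i₁ m)) (h2 : ∀ m, g (i₂ m) = g' (i₂ m)) : g = g' := by
  obtain ⟨x, _, hx⟩ := hQ.2 H (g.comp i₁) (g.comp i₂)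
    (by rw [MonoidHom.comp_assoc, MonoidHom.comp_assoc, hQ.1])
  rw [hx g ⟨rfl, rfl⟩,
    hx g' ⟨MonoidHom.ext fun m => (h1 m).symm, MonoidHom.ext fun m => (h2 m).symm⟩]

theorem core
    (R A P M Q Mgp Qgp C : Type u) [CommRing R] [CommRing A] [CommRing C]
    [CommMonoid P] [CommMonoid M] [CommMonoid Q] [CommGroup Mgp] [CommGroup Qgp]
    (f : R →+* A) (fb : P →* M) (α : M →* A)
    (i₁ i₂ : M →* Q) (hQ : IsCommMonoidPushout fb fb i₁ i₂)
    (μ : Q →* M) (hμ₁ : μ.comp i₁ = MonoidHom.id M) (hμ₂ : μ.comp i₂ = MonoidHom.id M)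
    (η : M →* Mgp) (hη : IsGroupCompletion η)
    (ηQ : Q →* Qgp) (hηQ : IsGroupCompletion ηQ)
    (μgp : Qgp →* Mgp) (hμgp : μgp.comp ηQ = η.comp μ)
    (rep : Submonoid (M × Qgp)) (hrep : rep = pullbackSubmonoid η μgp)
    (ρ : Q →* rep) (hρ : ∀ x : Q, (ρ x : M × Qgp) = (μ x, ηQ x))
    (ε : C →+* A) (u j : A →+* C) (k : rep →* C)
    (hu : ∀ a, ε (u a) = a) (hj : ∀ a, ε (j a) = a)
    (hk : ∀ w : rep, ε (k w) = α (w : M × Qgp).1)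
    (huj : ∀ r, u (f r) = j (f r))
    (hk1 : ∀ m, k (ρ (i₁ m)) = u (α m)) (hk2 : ∀ m, k (ρ (i₂ m)) = j (α m))
    (hext : ∀ (X : Type u) [AddCommGroup X] (D D' : C →+ X),
      (∀ a b w, D (u a * j b * k w) = D' (u a * j b * k w)) → D = D')
    (hlift : ∀ (B : Type u) [CommRing B] (g₁ g₂ : A →+* B) (h : rep →* B),
      ((∀ r, g₁ (f r) = g₂ (f r)) ∧ (∀ m, h (ρ (i₁ m)) = g₁ (α m)) ∧
        (∀ m, h (ρ (i₂ m)) = g₂ (α m))) →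
      ∃ Ψ : C →+* B, (∀ a, Ψ (u a) = g₁ a) ∧ (∀ a, Ψ (j a) = g₂ a) ∧ (∀ w, Ψ (k w) = h w)) :
    letI : Module A (RingHom.ker ε).Cotangent := Module.compHom _ u
    ∃ Φ : ∀ (X : Type u) [AddCommGroup X] [Module A X],
        LogDerivation R A P M f fb α X ≃ ((RingHom.ker ε).Cotangent →ₗ[A] X),
      ∀ (X X' : Type u) [AddCommGroup X] [Module A X] [AddCommGroup X']
        [Module A X'] (g : X →ₗ[A] X') (d : LogDerivation R A P M f fb α X),
        Φ X' (d.map g) = g.comp (Φ X d) := by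
  letI : Module A (RingHom.ker ε).Cotangent := Module.compHom _ u
  have hm1 : ∀ m, μ (i₁ m) = m := fun m => DFunLike.congr_fun hμ₁ m
  have hm2 : ∀ m, μ (i₂ m) = m := fun m => DFunLike.congr_fun hμ₂ m
  have hmg : ∀ x, μgp (ηQ x) = η (μ x) := fun x => DFunLike.congr_fun hμgp x
  have hfb : ∀ p, i₁ (fb p) = i₂ (fb p) := fun p => DFunLike.congr_fun hQ.1 p
  obtain ⟨s, hs, -⟩ := hη Qgp (ηQ.comp i₁)
  have hs' : ∀ m, s (η m) = ηQ (i₁ m) := fun m => DFunLike.congr_fun hs m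
  have hμs : ∀ x, μgp (s x) = x := by
    have : μgp.comp s = MonoidHom.id _ := gp_ext hη (by
      intro m
      simp [hs', hmg, hm1])
    exact fun x => DFunLike.congr_fun this x
  have hmem : ∀ q, ((1 : M), q / s (μgp q)) ∈ rep := by
    intro q
    rw [hrep]
    change η 1 = μgp _
    rw [map_div, hμs, div_self', map_one]
  let κ : Qgp →* rep :=
    { toFun := fun q => ⟨(1, q / s (μgp q)), hmem q⟩
      map_one' := by ext <;> simp
      map_mul' := by
        intro a b
        ext
        · simp
        · simp [mul_div_mul_comm] }
  have hκ1 : ∀ q, (κ q : M × Qgp).1 = 1 := fun _ => rfl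
  have hκ2 : ∀ q, (κ q : M × Qgp).2 = q / s (μgp q) := fun _ => rfl
  have hw : ∀ w : rep, w = ρ (i₁ (w : M × Qgp).1) * κ (w : M × Qgp).2 := by
    intro w
    have hw : η (w : M × Qgp).1 = μgp (w : M × Qgp).2 := by
      exact hrep.le w.2
    apply Subtype.ext
    rw [Submonoid.coe_mul, hρ]
    apply Prod.ext
    · simp [hκ1, hm1]
    · simp [hκ2, ← hw, hs']
  have hκi1 : ∀ m, κ (ηQ (i₁ m)) = 1 := by
    intro m
    apply Subtype.ext
    apply Prod.ext
    · rfl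
    · rw [hκ2, hmg, hm1, hs', div_self']; rfl
  have hk2' : ∀ m, j (α m) = u (α m) * k (κ (ηQ (i₂ m))) := by
    intro m
    rw [← hk2, hw (ρ (i₂ m)), map_mul, hρ, hm2, hk1]
  have hεκ : ∀ q, ε (k (κ q)) = 1 := by
    intro q
    rw [hk, hκ1, map_one]
  -- uniqueness of derivations
  have huniq : ∀ (X : Type u) [AddCommGroup X] [Module A X] (Δ Δ' : C →+ X),
      IsDer ε u Δ → IsDer ε u Δ' → (∀ a, Δ (j a) = Δ' (j a)) →
      (∀ m, Δ (k (κ (ηQ (i₂ m)))) = Δ' (k (κ (ηQ (i₂ m))))) → Δ = Δ' := by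
    intro X _ _ Δ Δ' h h' e1 e2
    let T : ∀ Δ : C →+ X, IsDer ε u Δ → (Qgp →* Multiplicative X) := fun Δ h =>
      { toFun := fun q => Multiplicative.ofAdd (Δ (k (κ q)))
        map_one' := by
          rw [map_one, map_one, ← map_one u, h.unit]; rfl
        map_mul' := by
          intro a b
          rw [map_mul, map_mul, h.leib, hεκ, hεκ, one_smul, one_smul, add_comm]; rfl }
    have hT : T Δ h = T Δ' h' := by
      apply gp_ext hηQ
      have : (T Δ h).comp ηQ = (T Δ' h').comp ηQ := by
        apply po_ext hQ
        · intro m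
          change Multiplicative.ofAdd (Δ (k (κ _))) = Multiplicative.ofAdd (Δ' (k (κ _)))
          rw [hκi1, map_one, ← map_one u, h.unit, h'.unit]
        · intro m
          exact congrArg Multiplicative.ofAdd (e2 m)
      exact fun m => DFunLike.congr_fun this m
    have hT' : ∀ q, Δ (k (κ q)) = Δ' (k (κ q)) := fun q => 
      congrArg Multiplicative.toAdd (DFunLike.congr_fun hT q)
    have hkk : ∀ w, Δ (k w) = Δ' (k w) := by
      intro w
      rw [hw w, map_mul, hk1, h.smul hu, h'.smul hu, hT']
    apply hext
    intro a b w
    rw [mul_assoc, h.smul hu, h'.smul hu, h.leib, h'.leib, e1, hkk]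
  -- the log derivation of a derivation
  have hmk : ∀ (X : Type u) [AddCommGroup X] [Module A X] (Δ : C →+ X), IsDer ε u Δ →
      ∃ d : LogDerivation R A P M f fb α X, (∀ a, Δ (j a) = d.D a) ∧
        (∀ m, Δ (k (κ (ηQ (i₂ m)))) = d.δ m) := by
    intro X _ _ Δ h
    refine ⟨{ D := fun a => Δ (j a), δ := fun m => Δ (k (κ (ηQ (i₂ m)))),
              D_add := ?_, D_smul := ?_, leibniz := ?_, delta_one := ?_, delta_mul := ?_,
              delta_base := ?_, compat := ?_ }, fun _ => rfl, fun _ => rfl⟩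
    · intro a b; rw [map_add, map_add]
    · intro r a; rw [map_mul, ← huj, h.smul hu]
    · intro a b; rw [map_mul, h.leib, hj, hj]
    · simp only [map_one]; rw [← map_one u, h.unit]
    · intro m m'
      simp only [map_mul]
      rw [h.leib, hεκ, hεκ, one_smul, one_smul, add_comm]
    · intro p
      rw [← hfb, hκi1, map_one, ← map_one u, h.unit]
    · intro m
      rw [hk2', h.smul hu]
  -- the derivation of a log derivation
  have hof : ∀ (X : Type u) [AddCommGroup X] [Module A X]
      (d : LogDerivation R A P M f fb α X), ∃ Δ : C →+ X, IsDer ε u Δ ∧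
        (∀ a, Δ (j a) = d.D a) ∧ (∀ m, Δ (k (κ (ηQ (i₂ m)))) = d.δ m) := by
    intro X _ _ d
    let δ₀ : M →* Multiplicative X :=
      { toFun := fun m => Multiplicative.ofAdd (d.δ m)
        map_one' := by rw [d.delta_one]; rfl
        map_mul' := by intro a b; rw [d.delta_mul]; rfl }
    obtain ⟨t, ⟨ht1, ht2⟩, -⟩ := hQ.2 (Multiplicative X) 1 δ₀ (by
      ext p
      exact congrArg Multiplicative.ofAdd (d.delta_base p).symm)
    obtain ⟨e, he, -⟩ := hηQ (Multiplicative X) t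
    have he1 : ∀ m, e (ηQ (i₁ m)) = 1 := by
      intro m
      rw [← MonoidHom.comp_apply e, he, ← MonoidHom.comp_apply t, ht1]; rfl
    have he2 : ∀ m, Multiplicative.toAdd (e (ηQ (i₂ m))) = d.δ m := by
      intro m
      rw [← MonoidHom.comp_apply e, he, ← MonoidHom.comp_apply t, ht2]; rfl
    have hD1 : d.D 1 = 0 := by
      have := d.leibniz 1 1
      simpa using this
    have hDf : ∀ r, d.D (f r) = 0 := by
      intro r
      have := d.D_smul r 1
      rwa [mul_one, hD1, smul_zero] at this
    let a₀ : rep →* A := α.comp ((MonoidHom.fst M Qgp).comp rep.subtype)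
    have ha₀ : ∀ w : rep, a₀ w = α (w : M × Qgp).1 := fun _ => rfl
    obtain ⟨Δ, h, h1, h2⟩ := exists_der_of_lift ε u j k hu hj a₀ hk
      (fun B _ g₁ g₂ h => ((∀ r, g₁ (f r) = g₂ (f r)) ∧ (∀ m, h (ρ (i₁ m)) = g₁ (α m)) ∧
        (∀ m, h (ρ (i₂ m)) = g₂ (α m)))) hext hlift (X := X)
      (AddMonoidHom.mk' d.D d.D_add) d.leibniz
      (fun w => a₀ w • Multiplicative.toAdd (e (w : M × Qgp).2))
      (by simp)
      (by
        intro w w'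
        simp only [map_mul, Submonoid.coe_mul, Prod.snd_mul, toAdd_mul, smul_add, mul_smul]
        rw [add_comm, smul_comm (a₀ w) (a₀ w') (Multiplicative.toAdd (e (w : M × Qgp).2))])
      (by
        intro B _ g₁ g₂ h F e1 e2 e3
        refine ⟨?_, ?_, ?_⟩
        · intro r
          rw [e1, e2]
          simp [hDf]
        · intro m
          rw [e3, e1, ha₀, hρ, hm1]
          simp [he1]
        · intro m
          rw [e3, e2, ha₀, hρ, hm2, he2]
          simp [d.compat])
    refine ⟨Δ, h, h1, ?_⟩
    intro m
    rw [h2, ha₀, hκ1, hκ2, hmg, hm2, hs', map_one, one_smul, map_div, he1, div_one, he2]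
  -- the relation between log derivations and linear maps
  let rel : ∀ (X : Type u) [AddCommGroup X] [Module A X],
      LogDerivation R A P M f fb α X → ((RingHom.ker ε).Cotangent →ₗ[A] X) → Prop :=
    fun X _ _ d φ =>
      (∀ a, φ ((RingHom.ker ε).toCotangent (red ε u hu (j a))) = d.D a) ∧
      (∀ m, φ ((RingHom.ker ε).toCotangent (red ε u hu (k (κ (ηQ (i₂ m)))))) = d.δ m)
  have r1 : ∀ (X : Type u) [AddCommGroup X] [Module A X]
      (d : LogDerivation R A P M f fb α X), ∃ φ, rel X d φ := by
    intro X _ _ d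
    obtain ⟨Δ, h, h1, h2⟩ := hof X d
    obtain ⟨φ, hφ⟩ := exists_lin ε u hu Δ h
    exact ⟨φ, fun a => (hφ _).trans (h1 a), fun m => (hφ _).trans (h2 m)⟩
  have r2 : ∀ (X : Type u) [AddCommGroup X] [Module A X]
      (φ : (RingHom.ker ε).Cotangent →ₗ[A] X), ∃ d, rel X d φ := by
    intro X _ _ φ
    obtain ⟨Δ, h, hφ⟩ := exists_der ε u hu φ
    obtain ⟨d, h1, h2⟩ := hmk X Δ h
    exact ⟨d, fun a => (hφ _).symm.trans (h1 a), fun m => (hφ _).symm.trans (h2 m)⟩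
  have r3 : ∀ (X : Type u) [AddCommGroup X] [Module A X]
      (d : LogDerivation R A P M f fb α X) φ φ', rel X d φ → rel X d φ' → φ = φ' := by
    intro X _ _ d φ φ' h h'
    obtain ⟨Δ, hΔ, hφ⟩ := exists_der ε u hu φ
    obtain ⟨Δ', hΔ', hφ'⟩ := exists_der ε u hu φ'
    have : Δ = Δ' := huniq X Δ Δ' hΔ hΔ'
      (fun a => by rw [hφ, hφ', h.1, h'.1]) (fun m => by rw [hφ, hφ', h.2, h'.2])
    apply lin_ext ε u hu
    intro c
    rw [← hφ, ← hφ', this]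
  have r4 : ∀ (X : Type u) [AddCommGroup X] [Module A X]
      (d d' : LogDerivation R A P M f fb α X) φ, rel X d φ → rel X d' φ → d = d' := by
    intro X _ _ d d' φ h h'
    have e1 : d.D = d'.D := funext fun a => (h.1 a).symm.trans (h'.1 a)
    have e2 : d.δ = d'.δ := funext fun a => (h.2 a).symm.trans (h'.2 a)
    cases d; cases d'
    simp only at e1 e2
    subst e1 e2
    rfl
  refine ⟨fun X _ _ =>
    { toFun := fun d => (r1 X d).choose
      invFun := fun φ => (r2 X φ).choose
      left_inv := fun d => r4 X _ _ _ (r2 X _).choose_spec (r1 X d).choose_spec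
      right_inv := fun φ => r3 X _ _ _ (r1 X _).choose_spec (r2 X φ).choose_spec }, ?_⟩
  intro X X' _ _ _ _ g d
  apply r3 X' (d.map g) _ _ (r1 X' (d.map g)).choose_spec
  exact ⟨fun a => congrArg g ((r1 X d).choose_spec.1 a),
    fun m => congrArg g ((r1 X d).choose_spec.2 m)⟩

end LogAux

/-- For a map `(f, f♭) : (R, P) → (A, M)` of pre-log rings and an `A`-module
`X`, there is a bijection, natural in `X`, between log derivations of `(A, M)`
over `(R, P)` with values in `X` and `A`-module homomorphisms `I/I² → X`,
where `I` is the kernel of the augmentation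
`ε : C = (A ⊗_R A) ⊗_{ℤ[M ⊕_P M]} ℤ[(M ⊕_P M)^rep] → A`. -/
theorem logDerivation_corepresented
    (R A P M Q Mgp Qgp : Type u) [CommRing R] [CommRing A]
    [CommMonoid P] [CommMonoid M] [CommMonoid Q] [CommGroup Mgp] [CommGroup Qgp]
    -- the map of pre-log rings
    (f : R →+* A) (fb : P →* M) (β : P →* R) (α : M →* A)
    (hcompat : ∀ p : P, α (fb p) = f (β p))
    -- `Q = M ⊕_P M`, the pushout in commutative monoids of `M ← P → M`
    (i₁ i₂ : M →* Q) (hQ : IsCommMonoidPushout fb fb i₁ i₂)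
    -- `μ : M ⊕_P M → M` is the codiagonal
    (μ : Q →* M) (hμ₁ : μ.comp i₁ = MonoidHom.id M) (hμ₂ : μ.comp i₂ = MonoidHom.id M)
    -- group completions of `M` and of `M ⊕_P M`
    (η : M →* Mgp) (hη : IsGroupCompletion η)
    (ηQ : Q →* Qgp) (hηQ : IsGroupCompletion ηQ)
    -- `μ^gp : (M ⊕_P M)^gp → M^gp`
    (μgp : Qgp →* Mgp) (hμgp : μgp.comp ηQ = η.comp μ) :
    -- `A` is an `R`-algebra via `f`
    letI : Algebra R A := f.toAlgebra
    -- the repletion `(M ⊕_P M)^rep` is the pullback of `η` and `μ^gp`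
    ∀ (rep : Submonoid (M × Qgp)), rep = pullbackSubmonoid η μgp →
    -- the canonical map `M ⊕_P M → (M ⊕_P M)^rep`
    ∀ (ρ : Q →* rep), (∀ x : Q, (ρ x : M × Qgp) = (μ x, ηQ x)) →
    -- the monoid map `M ⊕_P M → (A ⊗_R A, ·)` with components
    -- `m ↦ α(m) ⊗ 1` and `m ↦ 1 ⊗ α(m)`
    ∀ (θ : Q →* (A ⊗[R] A)),
      (∀ m : M, θ (i₁ m) = α m ⊗ₜ[R] 1) → (∀ m : M, θ (i₂ m) = 1 ⊗ₜ[R] α m) →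
    -- the induced ring map `ℤ[M ⊕_P M] → A ⊗_R A`
    ∀ (ψ : MonoidAlgebra ℤ Q →+* (A ⊗[R] A)),
      (∀ x : Q, ψ (MonoidAlgebra.single x 1) = θ x) →
    -- the ring map `ℤ[M ⊕_P M] → ℤ[(M ⊕_P M)^rep]` induced by `ρ`
    ∀ (χ : MonoidAlgebra ℤ Q →+* MonoidAlgebra ℤ ↥rep),
      (∀ x : Q, χ (MonoidAlgebra.single x 1) = MonoidAlgebra.single (ρ x) 1) →
    letI : Algebra (MonoidAlgebra ℤ Q) (A ⊗[R] A) := ψ.toAlgebra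
    letI : Algebra (MonoidAlgebra ℤ Q) (MonoidAlgebra ℤ ↥rep) := χ.toAlgebra
    -- the augmentation `ε : C → A`
    ∀ (ε : ((A ⊗[R] A) ⊗[MonoidAlgebra ℤ Q] MonoidAlgebra ℤ ↥rep) →+* A),
      (∀ (a b : A) (w : rep),
        ε ((a ⊗ₜ[R] b) ⊗ₜ[MonoidAlgebra ℤ Q] MonoidAlgebra.single w 1) =
          a * b * α (w : M × Qgp).1) →
    -- the unit `A → C`, making `I/I²` an `A`-module
    ∀ (u : A →+* ((A ⊗[R] A) ⊗[MonoidAlgebra ℤ Q] MonoidAlgebra ℤ ↥rep)),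
      (∀ a : A, u a = (a ⊗ₜ[R] (1 : A)) ⊗ₜ[MonoidAlgebra ℤ Q]
        (1 : MonoidAlgebra ℤ ↥rep)) →
    letI : Module A (RingHom.ker ε).Cotangent := Module.compHom _ u
    ∃ Φ : ∀ (X : Type u) [AddCommGroup X] [Module A X],
        LogDerivation R A P M f fb α X ≃ ((RingHom.ker ε).Cotangent →ₗ[A] X),
      ∀ (X X' : Type u) [AddCommGroup X] [Module A X] [AddCommGroup X']
        [Module A X'] (g : X →ₗ[A] X') (d : LogDerivation R A P M f fb α X),
        Φ X' (d.map g) = g.comp (Φ X d) := by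
  letI : Algebra R A := f.toAlgebra
  intro rep hrep ρ hρ θ hθ1 hθ2 ψ hψ χ hχ
  letI : Algebra (MonoidAlgebra ℤ Q) (A ⊗[R] A) := ψ.toAlgebra
  letI : Algebra (MonoidAlgebra ℤ Q) (MonoidAlgebra ℤ ↥rep) := χ.toAlgebra
  intro ε hε u hu
  let inc : (A ⊗[R] A) →+* ((A ⊗[R] A) ⊗[MonoidAlgebra ℤ Q] MonoidAlgebra ℤ ↥rep) :=
    Algebra.TensorProduct.includeLeftRingHom
  let j : A →+* ((A ⊗[R] A) ⊗[MonoidAlgebra ℤ Q] MonoidAlgebra ℤ ↥rep) :=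
    inc.comp (Algebra.TensorProduct.includeRight : A →ₐ[R] A ⊗[R] A).toRingHom
  let k : rep →* ((A ⊗[R] A) ⊗[MonoidAlgebra ℤ Q] MonoidAlgebra ℤ ↥rep) :=
    ((Algebra.TensorProduct.includeRight : MonoidAlgebra ℤ ↥rep →ₐ[MonoidAlgebra ℤ Q]
      (A ⊗[R] A) ⊗[MonoidAlgebra ℤ Q] MonoidAlgebra ℤ ↥rep) : _ →* _).comp
      (MonoidAlgebra.of ℤ rep)
  have hj : ∀ a, j a = ((1 : A) ⊗ₜ[R] a) ⊗ₜ[MonoidAlgebra ℤ Q] (1 : MonoidAlgebra ℤ ↥rep) :=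
    fun _ => rfl
  have hk : ∀ w, k w = (1 : A ⊗[R] A) ⊗ₜ[MonoidAlgebra ℤ Q] (MonoidAlgebra.single w (1 : ℤ)) :=
    fun _ => rfl
  have hprod : ∀ a b w, u a * j b * k w =
      (a ⊗ₜ[R] b) ⊗ₜ[MonoidAlgebra ℤ Q] (MonoidAlgebra.single w (1 : ℤ)) := by
    intro a b w
    rw [hu, hj, hk]
    simp only [Algebra.TensorProduct.tmul_mul_tmul, one_mul, mul_one]
  have hεp : ∀ a b w, ε (u a * j b * k w) = a * b * α (w : M × Qgp).1 := by
    intro a b w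
    rw [hprod, hε]
  have hbal : ∀ x : Q, k (ρ x) = inc (θ x) := by
    intro x
    rw [hk, ← hχ, ← hψ]
    change (1 : A ⊗[R] A) ⊗ₜ[MonoidAlgebra ℤ Q] (algebraMap (MonoidAlgebra ℤ Q) _ _) =
      (algebraMap (MonoidAlgebra ℤ Q) (A ⊗[R] A) _) ⊗ₜ[MonoidAlgebra ℤ Q] 1
    rw [Algebra.algebraMap_eq_smul_one, Algebra.algebraMap_eq_smul_one,
      TensorProduct.smul_tmul]
  refine LogAux.core R A P M Q Mgp Qgp _ f fb α i₁ i₂ hQ μ hμ₁ hμ₂ η hη ηQ hηQ μgp hμgp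
    rep hrep ρ hρ ε u j k ?_ ?_ ?_ ?_ ?_ ?_ ?_ ?_
  · intro a
    simpa using hεp a 1 1
  · intro a
    simpa using hεp 1 a 1
  · intro w
    simpa using hεp 1 1 w
  · intro r
    rw [hu, hj]
    congr 1
    have : f r = r • (1 : A) := by rw [Algebra.smul_def, mul_one]; rfl
    rw [this, TensorProduct.smul_tmul]
  · intro m
    rw [hbal, hθ1, hu]; rfl
  · intro m
    rw [hbal, hθ2, hj]; rfl
  · intro X _ D D' h
    apply AddMonoidHom.ext
    intro c
    induction c using TensorProduct.induction_on with
    | zero => rw [map_zero, map_zero]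
    | add x y hx hy => rw [map_add, map_add, hx, hy]
    | tmul x y =>
      induction x using TensorProduct.induction_on with
      | zero => rw [TensorProduct.zero_tmul, map_zero, map_zero]
      | add x y hx hy => rw [TensorProduct.add_tmul, map_add, map_add, hx, hy]
      | tmul a b =>
        induction y using MonoidAlgebra.induction_linear with
        | zero => rw [TensorProduct.tmul_zero, map_zero, map_zero]
        | add x y hx hy => rw [TensorProduct.tmul_add, map_add, map_add, hx, hy]
        | single w n =>
          have : (MonoidAlgebra.single w n : MonoidAlgebra ℤ rep) =
              n • MonoidAlgebra.single w (1 : ℤ) := by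
            rw [MonoidAlgebra.smul_single, smul_eq_mul, mul_one]
          have h2 : (a ⊗ₜ[R] b) ⊗ₜ[MonoidAlgebra ℤ Q] (MonoidAlgebra.single w n) =
              n • ((a ⊗ₜ[R] b) ⊗ₜ[MonoidAlgebra ℤ Q] (MonoidAlgebra.single w (1 : ℤ))) := by
            rw [this]
            exact map_zsmul (TensorProduct.mk (MonoidAlgebra ℤ Q) (A ⊗[R] A)
              (MonoidAlgebra ℤ rep) (a ⊗ₜ[R] b)) n _
          rw [h2, map_zsmul, map_zsmul, ← hprod, h]
  · rintro B _ g₁ g₂ h ⟨e1, e2, e3⟩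
    letI : Algebra R B := (g₁.comp f).toAlgebra
    let G₁ : A →ₐ[R] B := { g₁ with commutes' := fun r => rfl }
    let G₂ : A →ₐ[R] B := { g₂ with commutes' := fun r => (e1 r).symm }
    let G : A ⊗[R] A →ₐ[R] B := Algebra.TensorProduct.lift G₁ G₂ (fun _ _ => Commute.all _ _)
    have hG : ∀ a b, G (a ⊗ₜ[R] b) = g₁ a * g₂ b := fun a b =>
      Algebra.TensorProduct.lift_tmul _ _ _ _ _
    let K : MonoidAlgebra ℤ rep →ₐ[ℤ] B := MonoidAlgebra.lift ℤ B rep h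
    have hK : ∀ w, K (MonoidAlgebra.single w 1) = h w := by
      intro w
      simp [K, MonoidAlgebra.lift_single]
    have hGK0 : (G.toRingHom.comp ψ) = (K.toRingHom.comp χ) := by
      have hq : ((G : (A ⊗[R] A) →* B).comp θ) = h.comp ρ := by
        apply LogAux.po_ext hQ
        · intro m
          change G (θ (i₁ m)) = h (ρ (i₁ m))
          rw [hθ1, hG, e2, map_one, mul_one]
        · intro m
          change G (θ (i₂ m)) = h (ρ (i₂ m))
          rw [hθ2, hG, e3, map_one, one_mul]
      apply MonoidAlgebra.ringHom_ext
      · intro n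
        exact (DFunLike.congr_fun (RingHom.ext_int
          (((G.toRingHom.comp ψ)).comp MonoidAlgebra.singleOneRingHom)
          (((K.toRingHom.comp χ)).comp MonoidAlgebra.singleOneRingHom)) n)
      · intro x
        change G (ψ (MonoidAlgebra.single x 1)) = K (χ (MonoidAlgebra.single x 1))
        rw [hψ, hχ, hK]
        exact DFunLike.congr_fun hq x
    letI : Algebra (MonoidAlgebra ℤ Q) B := (G.toRingHom.comp ψ).toAlgebra
    let G' : A ⊗[R] A →ₐ[MonoidAlgebra ℤ Q] B := { G.toRingHom with commutes' := fun r => rfl }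
    let K' : MonoidAlgebra ℤ rep →ₐ[MonoidAlgebra ℤ Q] B :=
      { K.toRingHom with commutes' := fun r => (DFunLike.congr_fun hGK0 r).symm }
    let Ψ := Algebra.TensorProduct.lift G' K' (fun _ _ => Commute.all _ _)
    have hΨ : ∀ x y, Ψ (x ⊗ₜ[MonoidAlgebra ℤ Q] y) = G x * K y := fun a b =>
      Algebra.TensorProduct.lift_tmul _ _ _ _ _
    refine ⟨Ψ.toRingHom, ?_, ?_, ?_⟩
    · intro a
      change Ψ (u a) = _
      rw [hu, hΨ, hG, map_one, map_one, mul_one, mul_one]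
    · intro a
      change Ψ (j a) = _
      rw [hj, hΨ, hG, map_one, map_one, mul_one, one_mul]
    · intro w
      change Ψ (k w) = _
      rw [hk, hΨ, map_one, one_mul, hK]
end
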